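/- For every w ∈ ℕ, ∫_{-1}^{1} P_w(x) W_{p,n}(x) P_w(x)^T dx equals the diagonal matrix [√π · 2^{⌊w/2⌋} · Γ(n/2 + 1 + ⌊w/2⌋) · ∏_{k=0}^{⌊(w-1)/2⌋}(n+2k+1)] / [w! (n+1)(n+2w+1) Γ(n/2 + 3/2)] · diag( p(n-p+w+1)/(p+w), (n-p)(p+w+1)/(n-p+w) ). In particular this matrix is diagonal and positive definite. -/

import Mathlib

open Matrix

/-- Pochhammer symbol `(a)_k = a (a+1) ⋯ (a+k-1)`. -/
noncomputable def poch (a : ℝ) (k : ℕ) : ℝ := ∏ i ∈ Finset.range k, (a + i)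

/-- Gegenbauer polynomial `C_w^λ(x)`, with the convention `C_w^λ = 0` for `w < 0`. -/
noncomputable def geg (l : ℝ) (w : ℤ) (x : ℝ) : ℝ :=
  if w < 0 then 0 else
    poch (2 * l) w.toNat / (w.toNat.factorial : ℝ) *
      ∑ k ∈ Finset.range (w.toNat + 1),
        (poch (-(w.toNat : ℝ)) k * poch ((w.toNat : ℝ) + 2 * l) k) /
            (poch (l + 1 / 2) k * (k.factorial : ℝ)) * ((1 - x) / 2) ^ k

/-- The weight matrix `W_{p,n}(x)`. -/
noncomputable def Wmat (n : ℕ) (p : ℝ) (x : ℝ) : Matrix (Fin 2) (Fin 2) ℝ :=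
  (1 - x ^ 2) ^ ((n : ℝ) / 2 - 1) •
    !![p * x ^ 2 + (n : ℝ) - p, -(n : ℝ) * x; -(n : ℝ) * x, ((n : ℝ) - p) * x ^ 2 + p]

/-- The matrix valued polynomial `P_w`. -/
noncomputable def Pmat (n : ℕ) (p : ℝ) (w : ℕ) (x : ℝ) : Matrix (Fin 2) (Fin 2) ℝ :=
  !![1 / ((n : ℝ) + 1) * geg (((n : ℝ) + 1) / 2) (w : ℤ) x +
        1 / (p + w) * geg (((n : ℝ) + 3) / 2) ((w : ℤ) - 2) x,
      1 / (p + w) * geg (((n : ℝ) + 3) / 2) ((w : ℤ) - 1) x;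
      1 / ((n : ℝ) - p + w) * geg (((n : ℝ) + 3) / 2) ((w : ℤ) - 1) x,
      1 / ((n : ℝ) + 1) * geg (((n : ℝ) + 1) / 2) (w : ℤ) x +
        1 / ((n : ℝ) - p + w) * geg (((n : ℝ) + 3) / 2) ((w : ℤ) - 2) x]

/-!
The weight factors as `W(x) = (1 - x²)^(n/2 - 1) L(x) diag(n - p, p) L(x)ᵀ` with `L` of degree one,
and the contiguous relations between `C_w^λ` and `C_w^(λ+1)` turn `(n + 1) P_w L` into a matrix
built from `C_w`, `x C_w` and `C_{w-1}` for the single parameter `l = (n + 1) / 2`. Its off-diagonal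
contribution to `P_w W P_wᵀ` is odd, so only integrals of `C_w²`, `x² C_w²` and `x C_w C_{w-1}`
against `(1 - x²)^(l - 3/2)` remain. Since `(1 - x²)^(l - 1/2) f` vanishes at `±1`, integrating its
derivative for `f = C_w C_{w-1}` and `f = x C_w²` gives recurrences in `w` which express all of
them through `∫ C_w²` and reduce that one to the total mass of the weight, a Beta integral.
-/

section Pochhammer

lemma poch_zero (a : ℝ) : poch a 0 = 1 := Finset.prod_range_zero _

lemma poch_succ (a : ℝ) (k : ℕ) : poch a (k + 1) = poch a k * (a + k) :=
  Finset.prod_range_succ _ _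

lemma poch_succ_left (a : ℝ) (k : ℕ) : poch a (k + 1) = a * poch (a + 1) k := by
  simp [poch, Finset.prod_range_succ', mul_comm, add_comm, add_left_comm]

lemma poch_add (a : ℝ) (m k : ℕ) : poch a (m + k) = poch a m * poch (a + m) k := by
  simp [poch, Finset.prod_range_add, add_assoc]

lemma poch_pos {a : ℝ} (ha : 0 < a) (k : ℕ) : 0 < poch a k :=
  Finset.prod_pos fun _ _ => by positivity

lemma poch_neg_natCast_of_lt {w k : ℕ} (h : w < k) : poch (-w) k = 0 :=
  Finset.prod_eq_zero (Finset.mem_range.2 h) (neg_add_cancel _)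

lemma poch_neg_natCast_succ (w k : ℕ) :
    ((w : ℝ) + 1 - k) * poch (-(w + 1 : ℕ)) k = (w + 1) * poch (-w) k := by
  have h := (poch_succ (-(w + 1 : ℕ)) k).symm.trans (poch_succ_left _ k)
  rw [show -((w + 1 : ℕ) : ℝ) + 1 = -w by push_cast; ring] at h
  push_cast at h ⊢
  linear_combination -h

end Pochhammer

section Coefficients

/-- The coefficient of `((1 - x) / 2) ^ k` in the Gegenbauer polynomial `C_w^l(x)`, with
`(2l)_w (w + 2l)_k` written as `(2l)_{w+k}`. -/
noncomputable def gegCoeff (l : ℝ) (w k : ℕ) : ℝ :=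
  poch (2 * l) (w + k) * poch (-w) k / (w.factorial * (poch (l + 1 / 2) k * k.factorial))

lemma gegCoeff_of_lt (l : ℝ) {w k : ℕ} (h : w < k) : gegCoeff l w k = 0 := by
  simp [gegCoeff, poch_neg_natCast_of_lt h]

lemma gegCoeff_succ_left (l : ℝ) (w k : ℕ) :
    ((w : ℝ) + 1 - k) * gegCoeff l (w + 1) k = (w + k + 2 * l) * gegCoeff l w k := by
  have h := poch_neg_natCast_succ w k
  have hw : (w : ℝ) + 1 ≠ 0 := by positivity
  rw [gegCoeff, gegCoeff, add_right_comm, poch_succ, Nat.factorial_succ, ← mul_div_assoc,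
    mul_left_comm, h]
  push_cast
  field_simp
  ring

variable {l : ℝ} (hl : -(1 / 2) < l)
include hl

lemma gegCoeff_succ_right (w k : ℕ) :
    (l + 1 / 2 + k) * ((k + 1) * gegCoeff l w (k + 1)) =
      (w + k + 2 * l) * (k - w) * gegCoeff l w k := by
  have hpoch (m : ℕ) : poch (l + 1 / 2) m ≠ 0 := (poch_pos (by linarith) m).ne'
  have hk := hpoch (k + 1)
  rw [poch_succ] at hk
  rw [gegCoeff, gegCoeff, ← add_assoc, poch_succ, poch_succ, poch_succ, Nat.factorial_succ]
  generalize l + 1 / 2 + (k : ℝ) = c at *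
  have hc : c ≠ 0 := right_ne_zero_of_mul hk
  push_cast
  field_simp
  ring

lemma gegCoeff_sub_gegCoeff_succ (w k : ℕ) :
    (k + 1) / 2 * (gegCoeff l w (k + 1) - gegCoeff l (w + 1) (k + 1)) =
      (w + 1 - k) * gegCoeff l (w + 1) k := by
  have hlk : l + 1 / 2 + k ≠ 0 := by have := k.cast_nonneg (α := ℝ); linarith
  have h₁ := gegCoeff_succ_right hl w k
  have h₂ := gegCoeff_succ_right hl (w + 1) k
  push_cast at h₂
  refine mul_left_cancel₀ hlk ?_
  linear_combination (h₁ - h₂ - (k - w) * gegCoeff_succ_left l w k) / 2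

lemma two_mul_gegCoeff_add_one (w k : ℕ) :
    2 * l * gegCoeff (l + 1) w k = -((k + 1) / 2 * gegCoeff l (w + 1) (k + 1)) := by
  have h₁ : poch (2 * l) (w + 1 + (k + 1)) = 2 * l * (2 * l + 1) * poch (2 * (l + 1)) (w + k) := by
    rw [show w + 1 + (k + 1) = w + k + 1 + 1 by ring, poch_succ_left, poch_succ_left]
    ring_nf
  have h₂ : poch (-(w + 1 : ℕ)) (k + 1) = -((w + 1) * poch (-w) k) := by
    rw [poch_succ_left]
    push_cast
    ring_nf
  have h₃ : poch (l + 1 / 2) (k + 1) = (2 * l + 1) / 2 * poch (l + 1 + 1 / 2) k := by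
    rw [poch_succ_left]
    ring_nf
  have hl' : 2 * l + 1 ≠ 0 := by linarith
  rw [gegCoeff, gegCoeff, h₁, h₂, h₃, Nat.factorial_succ, Nat.factorial_succ]
  push_cast
  field_simp

end Coefficients

section Gegenbauer

lemma geg_of_neg (l : ℝ) {w : ℤ} (hw : w < 0) (x : ℝ) : geg l w x = 0 := if_pos hw

lemma geg_natCast_eq_sum (l : ℝ) {w N : ℕ} (h : w < N) (x : ℝ) :
    geg l w x = ∑ k ∈ Finset.range N, gegCoeff l w k * ((1 - x) / 2) ^ k := by
  rw [← Finset.sum_subset (Finset.range_subset_range.2 h) fun k _ hk => by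
      rw [gegCoeff_of_lt l (by simpa using hk), zero_mul],
    geg, if_neg (by lia), Int.toNat_natCast, Finset.mul_sum]
  refine Finset.sum_congr rfl fun k _ => ?_
  rw [gegCoeff, poch_add, add_comm (2 * l)]
  field_simp

lemma geg_zero (l x : ℝ) : geg l 0 x = 1 := by simp [geg, poch_zero]

@[fun_prop]
lemma continuous_geg (l : ℝ) (w : ℤ) : Continuous (geg l w) := by
  unfold geg
  split_ifs <;> fun_prop

variable {l : ℝ} (hl : -(1 / 2) < l)
include hl

lemma two_mul_geg_add_one_sub_one {w N : ℕ} (h : w ≤ N) (x : ℝ) :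
    2 * l * geg (l + 1) (w - 1) x =
      -∑ k ∈ Finset.range N, (k + 1) / 2 * gegCoeff l w (k + 1) * ((1 - x) / 2) ^ k := by
  cases w with
  | zero => simp [geg_of_neg, gegCoeff_of_lt]
  | succ w =>
    rw [Nat.cast_succ, add_sub_cancel_right, geg_natCast_eq_sum _ h, Finset.mul_sum,
      ← Finset.sum_neg_distrib]
    refine Finset.sum_congr rfl fun k _ => ?_
    rw [← mul_assoc, two_mul_gegCoeff_add_one hl]
    ring

lemma hasDerivAt_geg (w : ℤ) (x : ℝ) :
    HasDerivAt (geg l w) (2 * l * geg (l + 1) (w - 1) x) x := by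
  rcases lt_or_ge w 0 with hw | hw
  · rw [geg_of_neg _ (by lia), mul_zero, funext (geg_of_neg l hw)]
    exact hasDerivAt_const x 0
  lift w to ℕ using hw
  rw [funext (geg_natCast_eq_sum l w.lt_succ_self), two_mul_geg_add_one_sub_one hl le_rfl,
    ← Finset.sum_neg_distrib]
  have hy : HasDerivAt (fun x : ℝ => (1 - x) / 2) (-1 / 2) x :=
    ((hasDerivAt_id x).const_sub 1).div_const 2
  refine (HasDerivAt.fun_sum fun k _ => (hy.pow k).const_mul _).congr_deriv ?_
  rw [Finset.sum_range_succ']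
  simp only [Nat.cast_add, Nat.cast_one, add_tsub_cancel_right, Nat.cast_zero, zero_mul, mul_zero,
    add_zero]
  exact Finset.sum_congr rfl fun k _ => by ring

lemma one_sub_mul_geg_add_one_sub_one {w N : ℕ} (h : w ≤ N) (x : ℝ) :
    (1 - x) * (2 * l * geg (l + 1) (w - 1) x) =
      -∑ k ∈ Finset.range (N + 1), k * gegCoeff l w k * ((1 - x) / 2) ^ k := by
  rw [two_mul_geg_add_one_sub_one hl h, Finset.sum_range_succ', Nat.cast_zero, zero_mul, zero_mul,
    add_zero, mul_neg, Finset.mul_sum]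
  push_cast
  exact congrArg _ (Finset.sum_congr rfl fun k _ => by ring)

lemma mul_geg_sub_geg_sub_two (w : ℤ) (x : ℝ) :
    2 * l * (x * geg (l + 1) (w - 1) x - geg (l + 1) (w - 2) x) = w * geg l w x := by
  rcases le_or_gt w 0 with hw | hw
  · rw [geg_of_neg _ (show w - 1 < 0 by lia), geg_of_neg _ (show w - 2 < 0 by lia)]
    rcases hw.eq_or_lt with rfl | hw
    · simp
    · simp [geg_of_neg _ hw]
  obtain ⟨n, rfl⟩ : ∃ n : ℕ, w = n + 1 := ⟨w.toNat - 1, by lia⟩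
  have h₁ := two_mul_geg_add_one_sub_one hl (w := n + 1) (N := n + 2) (by lia) x
  have h₂ := one_sub_mul_geg_add_one_sub_one hl (w := n + 1) (N := n + 1) le_rfl x
  have h₃ := two_mul_geg_add_one_sub_one hl (w := n) (N := n + 2) (by lia) x
  push_cast at h₁ h₂
  rw [show (n : ℤ) + 1 - 2 = n - 1 by ring, ← Nat.cast_succ,
    geg_natCast_eq_sum l (n + 1).lt_succ_self]
  push_cast
  trans 2 * l * geg (l + 1) (n + 1 - 1) x - (1 - x) * (2 * l * geg (l + 1) (n + 1 - 1) x)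
    - 2 * l * geg (l + 1) (n - 1) x
  · ring
  rw [h₂, h₁, h₃, sub_neg_eq_add, sub_neg_eq_add, ← Finset.sum_neg_distrib,
    ← Finset.sum_add_distrib, ← Finset.sum_add_distrib, Finset.mul_sum]
  refine Finset.sum_congr rfl fun k _ => ?_
  linear_combination ((1 - x) / 2) ^ k * gegCoeff_sub_gegCoeff_succ hl n k

lemma geg_sub_one_sub_mul_geg_sub_two (w : ℤ) (x : ℝ) :
    2 * l * (geg (l + 1) (w - 1) x - x * geg (l + 1) (w - 2) x) =
      (w + 2 * l - 1) * geg l (w - 1) x := by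
  rcases le_or_gt w 0 with hw | hw
  · rw [geg_of_neg _ (show w - 1 < 0 by lia), geg_of_neg _ (show w - 2 < 0 by lia),
      geg_of_neg _ (show w - 1 < 0 by lia)]
    ring
  obtain ⟨n, rfl⟩ : ∃ n : ℕ, w = n + 1 := ⟨w.toNat - 1, by lia⟩
  have h₁ := two_mul_geg_add_one_sub_one hl (w := n + 1) (N := n + 1) le_rfl x
  have h₂ := two_mul_geg_add_one_sub_one hl (w := n) (N := n + 1) (by lia) x
  have h₃ := one_sub_mul_geg_add_one_sub_one hl (w := n) (N := n) le_rfl x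
  push_cast at h₁
  rw [show (n : ℤ) + 1 - 2 = n - 1 by ring, add_sub_cancel_right (n : ℤ),
    geg_natCast_eq_sum l n.lt_succ_self]
  rw [add_sub_cancel_right] at h₁
  push_cast
  trans 2 * l * geg (l + 1) n x - 2 * l * geg (l + 1) (n - 1) x
    + (1 - x) * (2 * l * geg (l + 1) (n - 1) x)
  · ring
  rw [h₃, h₁, h₂, sub_neg_eq_add, ← Finset.sum_neg_distrib, ← Finset.sum_neg_distrib,
    ← Finset.sum_add_distrib, ← Finset.sum_add_distrib, Finset.mul_sum]
  refine Finset.sum_congr rfl fun k _ => ?_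
  linear_combination ((1 - x) / 2) ^ k * (gegCoeff_sub_gegCoeff_succ hl n k +
    gegCoeff_succ_left l n k)

lemma one_sub_sq_mul_geg_sub_one (w : ℤ) (x : ℝ) :
    (1 - x ^ 2) * (2 * l * geg (l + 1) (w - 1) x) =
      (w + 2 * l - 1) * geg l (w - 1) x - w * x * geg l w x := by
  linear_combination geg_sub_one_sub_mul_geg_sub_two hl w x - x * mul_geg_sub_geg_sub_two hl w x

lemma one_sub_sq_mul_geg_sub_two (w : ℤ) (x : ℝ) :
    (1 - x ^ 2) * (2 * l * geg (l + 1) (w - 2) x) =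
      (w + 2 * l - 1) * x * geg l (w - 1) x - w * geg l w x := by
  linear_combination x * geg_sub_one_sub_mul_geg_sub_two hl w x - mul_geg_sub_geg_sub_two hl w x

lemma add_one_mul_geg_add_one (w : ℤ) (x : ℝ) :
    (w + 1) * geg l (w + 1) x =
      2 * (w + l) * x * geg l w x - (w + 2 * l - 1) * geg l (w - 1) x := by
  have h := one_sub_sq_mul_geg_sub_two hl (w + 1) x
  rw [show w + 1 - 2 = w - 1 by ring, add_sub_cancel_right] at h
  push_cast at h
  linear_combination h - one_sub_sq_mul_geg_sub_one hl w x

lemma geg_neg (w : ℤ) (x : ℝ) : geg l w (-x) = (-1) ^ w * geg l w x := by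
  rcases lt_or_ge w 0 with hw | hw
  · simp [geg_of_neg l hw]
  lift w to ℕ using hw
  rw [zpow_natCast]
  induction w using Nat.twoStepInduction with
  | zero => simp [geg_zero]
  | one =>
    have h := add_one_mul_geg_add_one hl 0
    simp only [geg_zero, geg_of_neg l (show (0 : ℤ) - 1 < 0 by norm_num)] at h
    have h₁ := h x
    have h₂ := h (-x)
    push_cast at h₁ h₂ ⊢
    simp only [zero_add, one_mul] at h₁ h₂
    linear_combination h₁ + h₂
  | more w ih₀ ih₁ =>
    have h := add_one_mul_geg_add_one hl (w + 1)
    have hw : (w : ℝ) + 2 ≠ 0 := by positivity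
    have h₁ := h x
    have h₂ := h (-x)
    push_cast [add_sub_cancel_right, add_assoc, one_add_one_eq_two] at h₁ h₂ ih₁ ⊢
    rw [ih₀, ih₁] at h₂
    refine mul_left_cancel₀ hw ?_
    linear_combination h₂ - (-1) ^ (w + 2) * h₁

lemma odd_geg_mul_mul_geg_sub (w : ℤ) (c : ℝ) :
    Function.Odd fun x => geg l w x * (x * geg l w x - c * geg l (w - 1) x) := by
  intro x
  have hsq : ((-1 : ℝ) ^ w) ^ 2 = 1 := by
    rw [pow_two, ← mul_zpow, neg_one_mul, neg_neg, _root_.one_zpow]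
  simp only [geg_neg hl, zpow_sub_one₀ (neg_ne_zero.2 (one_ne_zero' ℝ)), inv_neg_one]
  linear_combination -geg l w x * (x * geg l w x - c * geg l (w - 1) x) * hsq

end Gegenbauer

section UltrasphericalIntegral

open MeasureTheory intervalIntegral

lemma one_sub_sq_pos {x : ℝ} (hx : x ∈ Set.Ioo (-1 : ℝ) 1) : 0 < 1 - x ^ 2 := by
  nlinarith [hx.1, hx.2]

/-- The integral of `f` against the ultraspherical weight `(1 - x²)^a` on `[-1, 1]`. -/
noncomputable def ultrasphericalIntegral (a : ℝ) (f : ℝ → ℝ) : ℝ :=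
  ∫ x in (-1 : ℝ)..1, (1 - x ^ 2) ^ a * f x

lemma ultrasphericalIntegral_const_mul (a c : ℝ) (f : ℝ → ℝ) :
    ultrasphericalIntegral a (fun x => c * f x) = c * ultrasphericalIntegral a f := by
  simp only [ultrasphericalIntegral, ← intervalIntegral.integral_const_mul,
    mul_left_comm]

lemma ultrasphericalIntegral_eq_zero_of_odd (a : ℝ) {f : ℝ → ℝ} (hf : f.Odd) :
    ultrasphericalIntegral a f = 0 := by
  have h := integral_comp_neg (a := -1) (b := 1) fun x : ℝ => (1 - x ^ 2) ^ a * f x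
  simp only [neg_sq, hf _, mul_neg, intervalIntegral.integral_neg, neg_neg] at h
  exact self_eq_neg.1 h.symm

variable {a : ℝ} (ha : -1 < a)
include ha

lemma intervalIntegrable_one_sub_sq_rpow :
    IntervalIntegrable (fun x : ℝ => (1 - x ^ 2) ^ a) volume (-1) 1 := by
  have h₁ : IntervalIntegrable (fun x : ℝ => (1 - x ^ 2) ^ a) volume 0 1 := by
    have h : IntervalIntegrable (fun x : ℝ => (1 - x) ^ a) volume 0 1 := by
      simpa using ((intervalIntegrable_rpow' ha (a := 0) (b := 1)).comp_sub_left 1).symm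
    refine (h.mul_continuousOn (g := fun x => (1 + x) ^ a) ?_).congr fun x hx => ?_
    · rw [Set.uIcc_of_le zero_le_one]
      exact ContinuousOn.rpow_const (by fun_prop) fun x hx => .inl (by linarith [hx.1])
    · rw [Set.uIoc_of_le zero_le_one] at hx
      rw [← Real.mul_rpow (by linarith [hx.2]) (by linarith [hx.1])]
      ring_nf
  refine .trans (b := 0) ?_ h₁
  rw [IntervalIntegrable.iff_comp_neg]
  simpa using h₁.symm

lemma intervalIntegrable_one_sub_sq_rpow_mul {f : ℝ → ℝ} (hf : Continuous f) :
    IntervalIntegrable (fun x : ℝ => (1 - x ^ 2) ^ a * f x) volume (-1) 1 :=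
  (intervalIntegrable_one_sub_sq_rpow ha).mul_continuousOn hf.continuousOn

lemma ultrasphericalIntegral_add {f g : ℝ → ℝ} (hf : Continuous f) (hg : Continuous g) :
    ultrasphericalIntegral a (fun x => f x + g x) =
      ultrasphericalIntegral a f + ultrasphericalIntegral a g := by
  simp only [ultrasphericalIntegral, mul_add]
  exact integral_add (intervalIntegrable_one_sub_sq_rpow_mul ha hf)
    (intervalIntegrable_one_sub_sq_rpow_mul ha hg)

-- The integrand is the derivative of `(1 - x²)^(a + 1) f`, which vanishes at `±1`.
lemma ultrasphericalIntegral_eq_zero_of_hasDerivAt {f f' g : ℝ → ℝ}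
    (hf : ∀ x, HasDerivAt f (f' x) x) (hg : Continuous g)
    (hfg : ∀ x, (1 - x ^ 2) * f' x - 2 * (a + 1) * x * f x = g x) :
    ultrasphericalIntegral a g = 0 := by
  have hcont : Continuous f := continuous_iff_continuousAt.2 fun x => (hf x).continuousAt
  have hderiv (x : ℝ) (hx : x ∈ Set.Ioo (-1 : ℝ) 1) :
      HasDerivAt (fun x => (1 - x ^ 2) ^ (a + 1) * f x) ((1 - x ^ 2) ^ a * g x) x := by
    have hpos := one_sub_sq_pos hx
    refine ((((hasDerivAt_pow 2 x).const_sub 1).rpow_const (.inl hpos.ne')).mul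
      (hf x)).congr_deriv ?_
    rw [← hfg, add_sub_cancel_right, Real.rpow_add_one hpos.ne']
    push_cast
    ring
  rw [ultrasphericalIntegral, integral_eq_sub_of_hasDerivAt_of_le (by norm_num) ?_ hderiv
    (intervalIntegrable_one_sub_sq_rpow_mul ha hg)]
  · simp [Real.zero_rpow (show a + 1 ≠ 0 by linarith)]
  · exact (ContinuousOn.rpow_const (by fun_prop) fun _ _ => .inr (by linarith)).mul
      hcont.continuousOn

lemma ultrasphericalIntegral_one_eq_beta :
    ultrasphericalIntegral a (fun _ => 1) =
      2 ^ (2 * a + 1) * ProbabilityTheory.beta (a + 1) (a + 1) := by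
  have ha' : 0 < a + 1 := by linarith
  have hshift : ultrasphericalIntegral a (fun _ => 1) = ∫ y in (0 : ℝ)..2, y ^ a * (2 - y) ^ a := by
    have h := integral_comp_add_left (a := -1) (b := 1) (fun y : ℝ => y ^ a * (2 - y) ^ a) 1
    norm_num at h
    rw [← h, ultrasphericalIntegral]
    refine integral_congr fun x hx => ?_
    rw [Set.uIcc_of_le (by norm_num)] at hx
    rw [mul_one, ← Real.mul_rpow (by linarith [hx.1]) (by linarith [hx.2])]
    ring_nf
  have hscaled := Complex.betaIntegral_scaled (a + 1 : ℝ) (a + 1 : ℝ) two_pos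
  rw [Complex.betaIntegral_eq_Gamma_mul_div _ _ (by simpa using ha') (by simpa using ha'),
    ← Complex.ofReal_add, Complex.Gamma_ofReal, Complex.Gamma_ofReal] at hscaled
  rw [hshift, ProbabilityTheory.beta, ← Complex.ofReal_inj, ← integral_ofReal,
    show 2 * a + 1 = a + 1 + (a + 1) - 1 by ring]
  push_cast [Complex.ofReal_cpow zero_le_two] at hscaled ⊢
  rw [← hscaled]
  refine integral_congr fun y hy => ?_
  rw [Set.uIcc_of_le zero_le_two] at hy
  simp [Complex.ofReal_cpow hy.1, Complex.ofReal_cpow (sub_nonneg.2 hy.2)]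

lemma ultrasphericalIntegral_one :
    ultrasphericalIntegral a (fun _ => 1) =
      √Real.pi * Real.Gamma (a + 1) / Real.Gamma (a + 3 / 2) := by
  have ha' : 0 < a + 1 := by linarith
  have hdup := Real.Gamma_mul_Gamma_add_half (a + 1)
  rw [show a + 1 + 1 / 2 = a + 3 / 2 by ring, show 1 - 2 * (a + 1) = -(2 * a + 1) by ring,
    Real.rpow_neg zero_le_two] at hdup
  have hpos := Real.Gamma_pos_of_pos (show 0 < a + 3 / 2 by linarith)
  have := Real.Gamma_pos_of_pos (show 0 < 2 * (a + 1) by linarith)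
  have : (0 : ℝ) < 2 ^ (2 * a + 1) := by positivity
  rw [ultrasphericalIntegral_one_eq_beta ha, ProbabilityTheory.beta, ← two_mul, eq_div_iff hpos.ne',
    mul_assoc, div_mul_eq_mul_div, mul_assoc (Real.Gamma _), hdup]
  field_simp

end UltrasphericalIntegral

section Moments

/-- The integral of `(C_w^l)²` against `(1 - x²)^(l - 3/2)`. This is the orthogonality weight of
the Gegenbauer polynomials with parameter `l - 1`, not `l`. -/
noncomputable def gegSqIntegral (l : ℝ) (w : ℤ) : ℝ :=
  ultrasphericalIntegral (l - 3 / 2) fun x => geg l w x ^ 2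

variable {l : ℝ} (hl : 1 / 2 < l)
include hl

lemma mul_gegSqIntegral (w : ℤ) :
    w * gegSqIntegral l w = (w + 2 * l - 1) * gegSqIntegral l (w - 1) := by
  have hl' : -(1 / 2) < l := by linarith
  have h : ultrasphericalIntegral (l - 3 / 2)
      (fun x => (w + 2 * l - 1) * geg l (w - 1) x ^ 2 + -w * geg l w x ^ 2) = 0 := by
    refine ultrasphericalIntegral_eq_zero_of_hasDerivAt (by linarith)
      (fun x => (hasDerivAt_geg hl' w x).fun_mul (hasDerivAt_geg hl' (w - 1) x)) (by fun_prop)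
      fun x => ?_
    rw [sub_sub (w : ℤ), one_add_one_eq_two]
    linear_combination geg l (w - 1) x * one_sub_sq_mul_geg_sub_one hl' w x +
      geg l w x * one_sub_sq_mul_geg_sub_two hl' w x
  rw [ultrasphericalIntegral_add (by linarith) (by fun_prop) (by fun_prop),
    ultrasphericalIntegral_const_mul, ultrasphericalIntegral_const_mul] at h
  rw [gegSqIntegral, gegSqIntegral]
  linear_combination -h

lemma gegSqIntegral_natCast (w : ℕ) :
    gegSqIntegral l w = poch (2 * l) w / w.factorial *
      (√Real.pi * Real.Gamma (l - 1 / 2) / Real.Gamma l) := by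
  induction w with
  | zero =>
    simp only [gegSqIntegral, Nat.cast_zero, geg_zero, one_pow, poch_zero, Nat.factorial_zero,
      Nat.cast_one, div_one, one_mul]
    rw [ultrasphericalIntegral_one (by linarith), sub_add_cancel]
    ring_nf
  | succ w ih =>
    have h := mul_gegSqIntegral hl (w + 1)
    push_cast at h ⊢
    rw [add_sub_cancel_right, ih] at h
    have hw : (w : ℝ) + 1 ≠ 0 := by positivity
    refine mul_left_cancel₀ hw ?_
    rw [h, poch_succ, Nat.factorial_succ]
    push_cast
    field_simp
    ring

lemma gegSqIntegral_natCast_pos (w : ℕ) : 0 < gegSqIntegral l w := by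
  have := poch_pos (show 0 < 2 * l by linarith) w
  have := Real.Gamma_pos_of_pos (show 0 < l - 1 / 2 by linarith)
  have := Real.Gamma_pos_of_pos (show 0 < l by linarith)
  rw [gegSqIntegral_natCast hl]
  positivity

lemma ultrasphericalIntegral_sq_mul_geg_sq_eq_add (w : ℤ) :
    2 * (w + l) * ultrasphericalIntegral (l - 3 / 2) (fun x => x ^ 2 * geg l w x ^ 2) =
      gegSqIntegral l w + 2 * (w + 2 * l - 1) *
        ultrasphericalIntegral (l - 3 / 2) (fun x => x * (geg l w x * geg l (w - 1) x)) := by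
  have hl' : -(1 / 2) < l := by linarith
  have h : ultrasphericalIntegral (l - 3 / 2) (fun x => geg l w x ^ 2 +
      (2 * (w + 2 * l - 1) * (x * (geg l w x * geg l (w - 1) x)) +
        -(2 * (w + l)) * (x ^ 2 * geg l w x ^ 2))) = 0 := by
    refine ultrasphericalIntegral_eq_zero_of_hasDerivAt (by linarith)
      (fun x => (hasDerivAt_id' x).fun_mul ((hasDerivAt_geg hl' w x).fun_pow 2)) (by fun_prop)
      fun x => ?_
    rw [Nat.cast_ofNat]
    linear_combination 2 * x * geg l w x * one_sub_sq_mul_geg_sub_one hl' w x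
  rw [ultrasphericalIntegral_add (by linarith) (by fun_prop) (by fun_prop),
    ultrasphericalIntegral_add (by linarith) (by fun_prop) (by fun_prop),
    ultrasphericalIntegral_const_mul, ultrasphericalIntegral_const_mul] at h
  rw [gegSqIntegral]
  linear_combination -h

lemma add_one_mul_ultrasphericalIntegral_mul_geg (w : ℤ) :
    (w + 1) * ultrasphericalIntegral (l - 3 / 2) (fun x => x * (geg l (w + 1) x * geg l w x)) =
      gegSqIntegral l w + (w + 2 * l - 1) *
        ultrasphericalIntegral (l - 3 / 2) (fun x => x * (geg l w x * geg l (w - 1) x)) := by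
  have hrec : (w + 1) * ultrasphericalIntegral (l - 3 / 2)
        (fun x => x * (geg l (w + 1) x * geg l w x)) =
      2 * (w + l) * ultrasphericalIntegral (l - 3 / 2) (fun x => x ^ 2 * geg l w x ^ 2) +
        -(w + 2 * l - 1) *
          ultrasphericalIntegral (l - 3 / 2) (fun x => x * (geg l w x * geg l (w - 1) x)) := by
    simp_rw [← ultrasphericalIntegral_const_mul]
    rw [← ultrasphericalIntegral_add (by linarith) (by fun_prop) (by fun_prop)]
    congr 1 with x
    linear_combination x * geg l w x * add_one_mul_geg_add_one (l := l) (by linarith) w x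
  linear_combination hrec + ultrasphericalIntegral_sq_mul_geg_sq_eq_add hl w

lemma ultrasphericalIntegral_mul_geg_mul_geg_sub_one (w : ℕ) :
    ultrasphericalIntegral (l - 3 / 2) (fun x => x * (geg l w x * geg l (w - 1) x)) =
      gegSqIntegral l (w - 1) := by
  induction w with
  | zero => simp [ultrasphericalIntegral, gegSqIntegral, geg_of_neg]
  | succ w ih =>
    have h₁ := add_one_mul_ultrasphericalIntegral_mul_geg hl w
    have h₂ := mul_gegSqIntegral hl w
    have hw : (w : ℝ) + 1 ≠ 0 := by positivity
    push_cast at h₁ h₂ ⊢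
    rw [add_sub_cancel_right]
    refine mul_left_cancel₀ hw ?_
    rw [h₁, ih, ← h₂]
    ring

lemma ultrasphericalIntegral_sq_mul_geg_sq (w : ℕ) :
    2 * (w + l) * ultrasphericalIntegral (l - 3 / 2) (fun x => x ^ 2 * geg l w x ^ 2) =
      (2 * w + 1) * gegSqIntegral l w := by
  have h₁ := ultrasphericalIntegral_sq_mul_geg_sq_eq_add hl w
  have h₂ := mul_gegSqIntegral hl w
  rw [ultrasphericalIntegral_mul_geg_mul_geg_sub_one hl] at h₁
  push_cast at h₁ h₂
  linear_combination h₁ - 2 * h₂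

-- With `l = (ν + 1) / 2`, the integrand is a diagonal entry of `(ν + 1)² P_w W P_wᵀ`, the first one
-- for `q = p` and the second one for `q = ν - p`.
lemma ultrasphericalIntegral_row_sq (w : ℕ) {q : ℝ} (hq : q + w ≠ 0) :
    ultrasphericalIntegral (l - 3 / 2) (fun x => (2 * l - 1 - q) * (q / (q + w) * geg l w x) ^ 2 +
      q * (x * geg l w x - (w + 2 * l - 1) / (q + w) * geg l (w - 1) x) ^ 2) =
    (2 * l - 1) * (q * (2 * l - 1 - q + w + 1) / (q + w)) / (2 * (w + l)) * gegSqIntegral l w := by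
  set c := (w + 2 * l - 1) / (q + w) with hc
  trans (2 * l - 1 - q) * (q / (q + w)) ^ 2 * gegSqIntegral l w +
    (q * ultrasphericalIntegral (l - 3 / 2) (fun x => x ^ 2 * geg l w x ^ 2) +
      (-(2 * q * c) * gegSqIntegral l (w - 1) + q * c ^ 2 * gegSqIntegral l (w - 1)))
  · conv_rhs => enter [2, 2, 1]; rw [← ultrasphericalIntegral_mul_geg_mul_geg_sub_one hl]
    simp_rw [gegSqIntegral, ← ultrasphericalIntegral_const_mul]
    rw [← ultrasphericalIntegral_add (by linarith) (by fun_prop) (by fun_prop),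
      ← ultrasphericalIntegral_add (by linarith) (by fun_prop) (by fun_prop),
      ← ultrasphericalIntegral_add (by linarith) (by fun_prop) (by fun_prop)]
    congr 1 with x
    ring
  · have h₁ := ultrasphericalIntegral_sq_mul_geg_sq hl w
    have h₂ := mul_gegSqIntegral hl w
    have hwl : (w : ℝ) + l ≠ 0 := by linarith [w.cast_nonneg (α := ℝ)]
    rw [Int.cast_natCast] at h₂
    have h₃ : c * gegSqIntegral l (w - 1) = w / (q + w) * gegSqIntegral l w := by
      rw [hc]
      linear_combination -h₂ / (q + w)
    rw [mul_comm, ← eq_div_iff (mul_ne_zero two_ne_zero hwl)] at h₁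
    trans ((2 * l - 1 - q) * (q / (q + w)) ^ 2 + q * ((2 * w + 1) / (2 * (w + l))) +
      (q * c - 2 * q) * (w / (q + w))) * gegSqIntegral l w
    · rw [h₁]
      linear_combination (q * c - 2 * q) * h₃
    · rw [hc]
      field_simp
      ring

end Moments

section NormConst

lemma two_pow_mul_Gamma_mul_prod_eq_poch_two_mul {ν : ℝ} (hν : -2 < ν) (m : ℕ) :
    2 ^ m * Real.Gamma (ν / 2 + 1 + m) * ∏ k ∈ Finset.range m, (ν + 2 * k + 1) =
      poch (ν + 1) (2 * m) * Real.Gamma (ν / 2 + 1) := by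
  induction m with
  | zero => simp [poch_zero]
  | succ m ih =>
    have hGamma : Real.Gamma (ν / 2 + 1 + (m + 1 : ℕ)) =
        (ν / 2 + 1 + m) * Real.Gamma (ν / 2 + 1 + m) := by
      rw [← Real.Gamma_add_one (by linarith [m.cast_nonneg (α := ℝ)]), Nat.cast_succ, ← add_assoc]
    rw [Finset.prod_range_succ, show 2 * (m + 1) = 2 * m + 1 + 1 by ring, poch_succ, poch_succ,
      hGamma, pow_succ]
    push_cast
    linear_combination (ν + 1 + 2 * m) * (ν + 1 + (2 * m + 1)) * ih

lemma two_pow_mul_Gamma_mul_prod_eq_poch {ν : ℝ} (hν : -2 < ν) (w : ℕ) :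
    2 ^ (w / 2) * Real.Gamma (ν / 2 + 1 + (w / 2 : ℕ)) *
        ∏ k ∈ Finset.range ((w + 1) / 2), (ν + 2 * k + 1) =
      poch (ν + 1) w * Real.Gamma (ν / 2 + 1) := by
  rcases w.even_or_odd' with ⟨m, rfl | rfl⟩
  · rw [show 2 * m / 2 = m by lia, show (2 * m + 1) / 2 = m by lia,
      two_pow_mul_Gamma_mul_prod_eq_poch_two_mul hν]
  · rw [show (2 * m + 1) / 2 = m by lia, show (2 * m + 1 + 1) / 2 = m + 1 by lia,
      Finset.prod_range_succ, poch_succ]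
    push_cast
    linear_combination (ν + 1 + 2 * m) * two_pow_mul_Gamma_mul_prod_eq_poch_two_mul hν m

/-- The scalar factor of the squared norm of `P_w`, with a real parameter `ν` in place of `n`. -/
noncomputable def normConst (ν : ℝ) (w : ℕ) : ℝ :=
  (√Real.pi * 2 ^ (w / 2) * Real.Gamma (ν / 2 + 1 + (w / 2 : ℕ)) *
      ∏ k ∈ Finset.range ((w + 1) / 2), (ν + 2 * k + 1)) /
    (w.factorial * (ν + 1) * (ν + 2 * w + 1) * Real.Gamma (ν / 2 + 3 / 2))

lemma normConst_eq_mul_gegSqIntegral {ν : ℝ} (hν : 0 < ν) (w : ℕ) :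
    normConst ν w = ν / ((ν + 1) ^ 2 * (ν + 2 * w + 1)) * gegSqIntegral ((ν + 1) / 2) w := by
  have hprod := two_pow_mul_Gamma_mul_prod_eq_poch (show -2 < ν by linarith) w
  have := Real.Gamma_pos_of_pos (show 0 < ν / 2 + 1 / 2 by linarith)
  rw [normConst, mul_assoc √Real.pi, mul_assoc √Real.pi, hprod,
    Real.Gamma_add_one (show ν / 2 ≠ 0 by positivity), gegSqIntegral_natCast (by linarith),
    show ν / 2 + 3 / 2 = ν / 2 + 1 / 2 + 1 by ring, Real.Gamma_add_one (by positivity),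
    show 2 * ((ν + 1) / 2) = ν + 1 by ring, show (ν + 1) / 2 - 1 / 2 = ν / 2 by ring,
    show (ν + 1) / 2 = ν / 2 + 1 / 2 by ring]
  field_simp

lemma normConst_pos {ν : ℝ} (hν : 0 < ν) (w : ℕ) : 0 < normConst ν w := by
  have := gegSqIntegral_natCast_pos (show 1 / 2 < (ν + 1) / 2 by linarith) w
  rw [normConst_eq_mul_gegSqIntegral hν]
  positivity

end NormConst

section MatrixPolynomials

lemma mul_diagonal_mul_transpose_fin_two (a b c d s t : ℝ) :
    !![a, b; c, d] * diagonal ![s, t] * !![a, b; c, d]ᵀ =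
      !![s * a ^ 2 + t * b ^ 2, s * (a * c) + t * (b * d);
        s * (a * c) + t * (b * d), s * c ^ 2 + t * d ^ 2] := by
  ext i j
  fin_cases i <;> fin_cases j <;> simp [mul_apply, vecMul_diagonal] <;> ring

/-- The weight `Wmat` with a real parameter `ν` in place of `n`. -/
noncomputable def weightMatrix (ν p x : ℝ) : Matrix (Fin 2) (Fin 2) ℝ :=
  (1 - x ^ 2) ^ (ν / 2 - 1) • !![p * x ^ 2 + ν - p, -ν * x; -ν * x, (ν - p) * x ^ 2 + p]

/-- The polynomial `Pmat` with a real parameter `ν` in place of `n`. -/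
noncomputable def polyMatrix (ν p : ℝ) (w : ℕ) (x : ℝ) : Matrix (Fin 2) (Fin 2) ℝ :=
  !![1 / (ν + 1) * geg ((ν + 1) / 2) w x + 1 / (p + w) * geg ((ν + 3) / 2) (w - 2) x,
      1 / (p + w) * geg ((ν + 3) / 2) (w - 1) x;
      1 / (ν - p + w) * geg ((ν + 3) / 2) (w - 1) x,
      1 / (ν + 1) * geg ((ν + 1) / 2) w x + 1 / (ν - p + w) * geg ((ν + 3) / 2) (w - 2) x]

/-- The matrix `L(x)` in the factorisation `W(x) = (1 - x²)^(ν/2 - 1) L(x) diag(ν - p, p) L(x)ᵀ`. -/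
def weightFactor (x : ℝ) : Matrix (Fin 2) (Fin 2) ℝ := !![1, x; -x, -1]

lemma weightMatrix_eq_smul_mul (ν p x : ℝ) :
    weightMatrix ν p x = (1 - x ^ 2) ^ (ν / 2 - 1) •
      (weightFactor x * diagonal ![ν - p, p] * (weightFactor x)ᵀ) := by
  rw [weightMatrix, weightFactor, mul_diagonal_mul_transpose_fin_two]
  congr! 2
  ring_nf

/-- The product `(ν + 1) P_w(x) L(x)`, which only involves `C_w` and `C_{w-1}` for the parameter
`(ν + 1) / 2`. -/
noncomputable def reducedPolyMatrix (ν p : ℝ) (w : ℕ) (x : ℝ) : Matrix (Fin 2) (Fin 2) ℝ :=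
  !![p / (p + w) * geg ((ν + 1) / 2) w x,
      x * geg ((ν + 1) / 2) w x - (w + ν) / (p + w) * geg ((ν + 1) / 2) (w - 1) x;
      -(x * geg ((ν + 1) / 2) w x - (w + ν) / (ν - p + w) * geg ((ν + 1) / 2) (w - 1) x),
      -((ν - p) / (ν - p + w) * geg ((ν + 1) / 2) w x)]

variable {ν p : ℝ} {w : ℕ} (hν : 0 < ν) (hp : p + w ≠ 0) (hνp : ν - p + w ≠ 0)
include hν hp hνp

lemma polyMatrix_mul_weightFactor (x : ℝ) :
    polyMatrix ν p w x * weightFactor x = (1 / (ν + 1)) • reducedPolyMatrix ν p w x := by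
  have hl : -(1 / 2) < (ν + 1) / 2 := by linarith
  have h₁ := mul_geg_sub_geg_sub_two hl w x
  have h₂ := geg_sub_one_sub_mul_geg_sub_two hl w x
  rw [show (ν + 1) / 2 + 1 = (ν + 3) / 2 by ring, Int.cast_natCast] at h₁ h₂
  have hν' : ν + 1 ≠ 0 := by positivity
  rw [polyMatrix, weightFactor, reducedPolyMatrix]
  ext a b
  fin_cases a <;> fin_cases b <;> simp [mul_apply] <;> field_simp
  · linear_combination -h₁
  · linear_combination -h₂
  · linear_combination h₂
  · linear_combination h₁

omit hp hνp in
lemma ultrasphericalIntegral_row_sq_eq_normConst {q : ℝ} (hq : q + w ≠ 0) :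
    ultrasphericalIntegral ((ν + 1) / 2 - 3 / 2) (fun x =>
      (ν - q) * (q / (q + w) * geg ((ν + 1) / 2) w x) ^ 2 + q * (x * geg ((ν + 1) / 2) w x -
        (w + ν) / (q + w) * geg ((ν + 1) / 2) (w - 1) x) ^ 2) =
      (ν + 1) ^ 2 * (normConst ν w * (q * (ν - q + w + 1) / (q + w))) := by
  have h := ultrasphericalIntegral_row_sq (l := (ν + 1) / 2) (by linarith) w hq
  rw [show (w : ℝ) + 2 * ((ν + 1) / 2) - 1 = w + ν by ring,
    show 2 * ((ν + 1) / 2) - 1 = ν by ring,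
    show 2 * (w + (ν + 1) / 2) = ν + 2 * w + 1 by ring] at h
  rw [h, normConst_eq_mul_gegSqIntegral hν]
  field_simp

lemma polyMatrix_mul_weightMatrix_mul_transpose (x : ℝ) :
    polyMatrix ν p w x * weightMatrix ν p x * (polyMatrix ν p w x)ᵀ =
      (1 / (ν + 1) ^ 2 * (1 - x ^ 2) ^ (ν / 2 - 1)) •
        (reducedPolyMatrix ν p w x * diagonal ![ν - p, p] * (reducedPolyMatrix ν p w x)ᵀ) := by
  have hfactor := polyMatrix_mul_weightFactor hν hp hνp x
  calc polyMatrix ν p w x * weightMatrix ν p x * (polyMatrix ν p w x)ᵀ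
    _ = (1 - x ^ 2) ^ (ν / 2 - 1) • (polyMatrix ν p w x * weightFactor x *
          diagonal ![ν - p, p] * (polyMatrix ν p w x * weightFactor x)ᵀ) := by
      simp only [weightMatrix_eq_smul_mul, Matrix.mul_smul, Matrix.smul_mul, transpose_mul,
        Matrix.mul_assoc]
    _ = _ := by
      simp only [hfactor, transpose_smul, Matrix.mul_smul, Matrix.smul_mul, smul_smul]
      congr 1
      field_simp

lemma ultrasphericalIntegral_reducedPolyMatrix (a b : Fin 2) :
    ultrasphericalIntegral ((ν + 1) / 2 - 3 / 2) (fun x =>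
      (reducedPolyMatrix ν p w x * diagonal ![ν - p, p] * (reducedPolyMatrix ν p w x)ᵀ) a b) =
    (ν + 1) ^ 2 * (normConst ν w • diagonal ![p * (ν - p + w + 1) / (p + w),
      (ν - p) * (p + w + 1) / (ν - p + w)]) a b := by
  have hrow₁ := ultrasphericalIntegral_row_sq_eq_normConst hν hp
  have hrow₂ := ultrasphericalIntegral_row_sq_eq_normConst hν hνp
  have hoff : ultrasphericalIntegral ((ν + 1) / 2 - 3 / 2) (fun x =>
      (reducedPolyMatrix ν p w x * diagonal ![ν - p, p] * (reducedPolyMatrix ν p w x)ᵀ) 0 1) = 0 :=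
    ultrasphericalIntegral_eq_zero_of_odd _ fun x => by
      have hodd (c : ℝ) := odd_geg_mul_mul_geg_sub (l := (ν + 1) / 2) (by linarith) w c x
      simp only [reducedPolyMatrix, mul_diagonal_mul_transpose_fin_two, of_apply, cons_val',
        cons_val_one, cons_val_zero, cons_val_fin_one]
      linear_combination -(ν - p) * (p / (p + w)) * hodd ((w + ν) / (ν - p + w)) -
        p * ((ν - p) / (ν - p + w)) * hodd ((w + ν) / (p + w))
  simp only [reducedPolyMatrix, mul_diagonal_mul_transpose_fin_two] at hoff ⊢
  fin_cases a <;> fin_cases b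
  · simpa using hrow₁
  · simpa using hoff
  · simpa using hoff
  · simpa [add_comm, -neg_sub] using hrow₂

theorem integral_polyMatrix_mul_weightMatrix_mul_transpose :
    (Matrix.of fun a b : Fin 2 =>
        ∫ x in (-1 : ℝ)..1,
          (polyMatrix ν p w x * weightMatrix ν p x * (polyMatrix ν p w x)ᵀ) a b) =
      normConst ν w • diagonal ![p * (ν - p + w + 1) / (p + w),
        (ν - p) * (p + w + 1) / (ν - p + w)] := by
  ext a b
  have h := ultrasphericalIntegral_reducedPolyMatrix hν hp hνp a b
  simp_rw [of_apply, polyMatrix_mul_weightMatrix_mul_transpose hν hp hνp, Matrix.smul_apply,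
    smul_eq_mul, mul_assoc (1 / (ν + 1) ^ 2), intervalIntegral.integral_const_mul]
  rw [ultrasphericalIntegral, show (ν + 1) / 2 - 3 / 2 = ν / 2 - 1 by ring] at h
  rw [h, one_div, inv_mul_cancel_left₀ (by positivity), Matrix.smul_apply, smul_eq_mul]

end MatrixPolynomials

theorem stmt_4_general {ν p : ℝ} (hp : 0 < p) (hpν : p < ν) (w : ℕ) :
    (Matrix.of fun a b : Fin 2 =>
        ∫ x in (-1 : ℝ)..1,
          (polyMatrix ν p w x * weightMatrix ν p x * (polyMatrix ν p w x)ᵀ) a b) =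
      normConst ν w • diagonal ![p * (ν - p + w + 1) / (p + w),
        (ν - p) * (p + w + 1) / (ν - p + w)] ∧
    (Matrix.of fun a b : Fin 2 =>
        ∫ x in (-1 : ℝ)..1,
          (polyMatrix ν p w x * weightMatrix ν p x * (polyMatrix ν p w x)ᵀ) a b).PosDef := by
  have : 0 < ν - p := sub_pos.2 hpν
  have heq := integral_polyMatrix_mul_weightMatrix_mul_transpose (hp.trans hpν)
    (show p + w ≠ 0 by positivity) (show ν - p + w ≠ 0 by positivity)
  refine ⟨heq, heq ▸ PosDef.smul ?_ (normConst_pos (hp.trans hpν) w)⟩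
  rw [posDef_diagonal_iff, Fin.forall_fin_two]
  constructor
  · change 0 < p * (ν - p + w + 1) / (p + w)
    positivity
  · change 0 < (ν - p) * (p + w + 1) / (ν - p + w)
    positivity

/-- `∫_{-1}^{1} P_w W_{p,n} P_w^T dx` equals the stated diagonal matrix, which is
positive definite. -/
theorem stmt_4 (n : ℕ) (hn : 1 ≤ n) (p : ℝ) (hp : 0 < p) (hpn : p < n) (w : ℕ) :
    (Matrix.of fun a b : Fin 2 =>
        ∫ x in (-1 : ℝ)..1, (Pmat n p w x * Wmat n p x * (Pmat n p w x)ᵀ) a b) =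
      ((Real.sqrt Real.pi * 2 ^ (w / 2) * Real.Gamma ((n : ℝ) / 2 + 1 + (w / 2 : ℕ)) *
            ∏ k ∈ Finset.range ((w + 1) / 2), ((n : ℝ) + 2 * k + 1)) /
          ((w.factorial : ℝ) * ((n : ℝ) + 1) * ((n : ℝ) + 2 * w + 1) *
            Real.Gamma ((n : ℝ) / 2 + 3 / 2))) •
        Matrix.diagonal ![p * ((n : ℝ) - p + w + 1) / (p + w),
          ((n : ℝ) - p) * (p + w + 1) / ((n : ℝ) - p + w)] ∧
    (Matrix.of fun a b : Fin 2 =>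
        ∫ x in (-1 : ℝ)..1, (Pmat n p w x * Wmat n p x * (Pmat n p w x)ᵀ) a b).PosDef :=
  stmt_4_general hp hpn w
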